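/- arXiv:1602.00768 — 3 statements merged into one kernel-verified Lean document; each statement's English description precedes it below -/
import Mathlib

section
/- Fix 1 ≤ k ≤ m+2n−1. Suppose x ∈ S_n and (V_i)_{i ∈ {0,…,m+2n} \ {k}} is a partial flag in ℂ^{m+2n} (subspaces with dim V_i = i, V_0 = 0, V_{m+2n} = ℂ^{m+2n}, and V_i ⊆ V_j whenever i ≤ j) such that x V_{k+1} ⊆ V_{k−1} and x V_i ⊆ V_{i−1} for all i ∉ {k, k+1} with i ≥ 1. Then dim ker x = 2, ker x ⊆ V_{k+1}, and x V_{k+1} = V_{k−1}. (Step in the proof of Proposition 2.3 of the paper.) -/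
/-!
Outside rows `m+n` and `m+2n` an element `x` of the slice acts as the shift `z_n`, so a vector in
`ker x` has all coordinates zero except possibly the first and the `(m+n+1)`-st; hence
`dim ker x ≤ 2` (`finrank_ker_le_two`). On the other hand `x` maps the `(k+1)`-dimensional `V_{k+1}`
into the `(k-1)`-dimensional `V_{k-1}`, so by rank-nullity `dim (ker x ∩ V_{k+1}) ≥ 2`. All the
inequalities are therefore equalities, which is the claim.
-/

open Module BigOperators

noncomputable section

/-- The `k`-th standard basis vector `u_k` of `ℂ^(m+2n)`, indexed `1`-based;
it is zero if `k` is out of the range `1, …, m+2n`. -/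
def stdVec (m n : ℕ) (k : ℕ) : Fin (m + 2*n) → ℂ := fun i => if (i : ℕ) + 1 = k then 1 else 0

/-- The matrix of the two-block nilpotent `z_n` of Jordan type `(m+n, n)`:
`z_n u_i = u_{i-1}` for `2 ≤ i ≤ m+n` and for `m+n+2 ≤ i ≤ m+2n`, and
`z_n u_1 = z_n u_{m+n+1} = 0`. -/
def zMat (m n : ℕ) : Matrix (Fin (m + 2*n)) (Fin (m + 2*n)) ℂ :=
  fun i j => if (j : ℕ) = (i : ℕ) + 1 ∧ (j : ℕ) ≠ m + n then 1 else 0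

/-- The two-block nilpotent `z_n` as an endomorphism of `ℂ^(m+2n)`. -/
def zn (m n : ℕ) : Module.End ℂ (Fin (m + 2*n) → ℂ) := Matrix.toLin' (zMat m n)

/-- The enlarged slice `S_n' ⊆ End(ℂ^(m+2n))`: the endomorphisms whose matrix agrees
with that of `z_n` outside rows `m+n` and `m+2n`, i.e. `x u_j - z_n u_j` lies in
`span{u_{m+n}, u_{m+2n}}` for every `j`. -/
def slice' (m n : ℕ) : Set (Module.End ℂ (Fin (m + 2*n) → ℂ)) :=
  { x | ∀ j : ℕ, x (stdVec m n j) - zn m n (stdVec m n j) ∈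
      Submodule.span ℂ {stdVec m n (m + n), stdVec m n (m + 2*n)} }

/-- The matrix entry `x_{p,q}` (`1`-based) of an endomorphism of `ℂ^(m+2n)`
in the standard basis `u_1, …, u_{m+2n}`. -/
def entry (m n : ℕ) (x : Module.End ℂ (Fin (m + 2*n) → ℂ)) (p q : ℕ) : ℂ :=
  ∑ i, stdVec m n p i * x (stdVec m n q) i

/-- The Mirkovic–Vybornov slice `S_n ⊆ S_n'`: for `n ≥ 1` it consists of those
`x ∈ S_n'` whose matrix entries `x_{m+2n, j}` vanish for `n+1 ≤ j ≤ m+n`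
(for `n = 0` the slices `S_0` and `S_0'` coincide, so no further condition is imposed). -/
def MVslice (m n : ℕ) : Set (Module.End ℂ (Fin (m + 2*n) → ℂ)) :=
  { x | x ∈ slice' m n ∧
      ∀ j : ℕ, n + 1 ≤ j → j ≤ m + n → n ≠ 0 → entry m n x (m + 2*n) j = 0 }


lemma stdVec_succ (m n : ℕ) (j : Fin (m + 2*n)) :
    stdVec m n (j + 1) = Pi.single j 1 := by
  ext i
  simp [stdVec, Pi.single_apply, Fin.ext_iff]

lemma zn_apply_eq (m n : ℕ) (v : Fin (m + 2*n) → ℂ) (i j : Fin (m + 2*n))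
    (hj : (j : ℕ) = i + 1) (hj' : (j : ℕ) ≠ m + n) : zn m n v i = v j := by
  rw [zn, Matrix.toLin'_apply, Matrix.mulVec, dotProduct, Finset.sum_eq_single j]
  · simp [zMat, hj, hj ▸ hj']
  · intro b _ hb
    have : ¬ ((b : ℕ) = i + 1) := fun h => hb (Fin.ext (by omega))
    simp [zMat, this]
  · simp

/-- Away from rows `m+n` and `m+2n`, elements of `S_n'` have the same coordinates as `z_n`. -/
lemma slice'_apply_eq {m n : ℕ} {x : Module.End ℂ (Fin (m + 2*n) → ℂ)} (hx : x ∈ slice' m n)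
    (v : Fin (m + 2*n) → ℂ) (i : Fin (m + 2*n)) (h1 : (i : ℕ) + 1 ≠ m + n)
    (h2 : (i : ℕ) + 1 ≠ m + 2*n) : x v i = zn m n v i := by
  have key : LinearMap.proj i ∘ₗ x = LinearMap.proj i ∘ₗ zn m n := by
    refine LinearMap.pi_ext' fun j => LinearMap.ext_ring ?_
    obtain ⟨a, b, hab⟩ := Submodule.mem_span_pair.1 (hx (j + 1))
    have := congrFun hab i
    rw [stdVec_succ] at this
    simp only [stdVec, Pi.add_apply, Pi.smul_apply, Pi.sub_apply, if_neg h1, if_neg h2,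
      smul_zero, add_zero] at this
    simpa using (sub_eq_zero.1 this.symm)
  exact LinearMap.congr_fun key v

lemma ker_coord_eq_zero {m n : ℕ} {x : Module.End ℂ (Fin (m + 2*n) → ℂ)} (hx : x ∈ slice' m n)
    {v : Fin (m + 2*n) → ℂ} (hv : x v = 0) (j : Fin (m + 2*n)) (h0 : (j : ℕ) ≠ 0)
    (h1 : (j : ℕ) ≠ m + n) : v j = 0 := by
  have hlt := j.isLt
  rw [← zn_apply_eq m n v ⟨j - 1, by omega⟩ j (by simp; omega) h1,
    ← slice'_apply_eq hx v _ (by simp; omega) (by simp; omega), hv]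
  rfl

lemma finrank_ker_le_two {m n : ℕ} (hn : 1 ≤ n) {x : Module.End ℂ (Fin (m + 2*n) → ℂ)}
    (hx : x ∈ slice' m n) : Module.finrank ℂ (LinearMap.ker x) ≤ 2 := by
  -- The two coordinates that can be nonzero on the kernel embed it into `ℂ × ℂ`.
  let f : (Fin (m + 2*n) → ℂ) →ₗ[ℂ] ℂ × ℂ :=
    (LinearMap.proj ⟨0, by omega⟩).prod (LinearMap.proj ⟨m + n, by omega⟩)
  have hf : Function.Injective (f.domRestrict (LinearMap.ker x)) := by
    rw [injective_iff_map_eq_zero]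
    rintro ⟨v, hv⟩ hfv
    have hfv' : v ⟨0, by omega⟩ = 0 ∧ v ⟨m + n, by omega⟩ = 0 := Prod.mk.inj hfv
    ext j
    by_cases h0 : (j : ℕ) = 0
    · exact (congrArg v (Fin.ext h0)).trans hfv'.1
    by_cases h1 : (j : ℕ) = m + n
    · exact (congrArg v (Fin.ext h1)).trans hfv'.2
    exact ker_coord_eq_zero hx hv j h0 h1
  simpa using LinearMap.finrank_le_finrank_of_injective hf

/-- If `x ∈ S_n` admits a partial flag `(V_i)_{i ∈ {0,…,m+2n}∖{k}}`
with `x V_{k+1} ⊆ V_{k−1}` and `x V_i ⊆ V_{i−1}` for the remaining indices, then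
`dim ker x = 2`, `ker x ⊆ V_{k+1}`, and `x V_{k+1} = V_{k−1}`. -/
theorem partial_flag_ker_eq_two (m n k : ℕ) (hn : 1 ≤ n) (hk1 : 1 ≤ k)
    (hk2 : k ≤ m + 2*n - 1)
    (x : Module.End ℂ (Fin (m + 2*n) → ℂ)) (hx : x ∈ MVslice m n)
    (V : {i : ℕ // i ≤ m + 2*n ∧ i ≠ k} → Submodule ℂ (Fin (m + 2*n) → ℂ))
    (hdim : ∀ i, Module.finrank ℂ (V i) = i.val)
    (hbot : ∀ i, i.val = 0 → V i = ⊥)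
    (htop : ∀ i, i.val = m + 2*n → V i = ⊤)
    (hmono : ∀ i j, i.val ≤ j.val → V i ≤ V j)
    (hxk : ∀ i j, i.val = k + 1 → j.val = k - 1 → ∀ v ∈ V i, x v ∈ V j)
    (hxstep : ∀ i j, i.val = j.val + 1 → ∀ v ∈ V i, x v ∈ V j) :
    Module.finrank ℂ (LinearMap.ker x) = 2 ∧
    LinearMap.ker x ≤ V ⟨k + 1, by omega⟩ ∧
    (V ⟨k + 1, by omega⟩).map x = V ⟨k - 1, by omega⟩ := by
  have hker := finrank_ker_le_two hn hx.1
  set W := V ⟨k + 1, by omega⟩ with hW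
  set U := V ⟨k - 1, by omega⟩ with hU
  have hdW : Module.finrank ℂ W = k + 1 := hdim _
  have hdU : Module.finrank ℂ U = k - 1 := hdim _
  have hmap : W.map x ≤ U := Submodule.map_le_iff_le_comap.2 fun v hv => hxk _ _ rfl rfl v hv
  have hmapdim := Submodule.finrank_mono hmap
  have hinf : Module.finrank ℂ (LinearMap.ker x ⊓ W : Submodule ℂ _) ≤
      Module.finrank ℂ (LinearMap.ker x) := Submodule.finrank_mono inf_le_left
  have hrn : Module.finrank ℂ (W.map x) +
      Module.finrank ℂ (LinearMap.ker x ⊓ W : Submodule ℂ _) = Module.finrank ℂ W := by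
    rw [← LinearMap.finrank_range_add_finrank_ker (x.domRestrict W), LinearMap.range_domRestrict,
      LinearMap.ker_domRestrict, inf_comm, ← Submodule.map_comap_subtype,
      Submodule.finrank_map_subtype_eq]
  refine ⟨by omega, ?_, Submodule.eq_of_le_of_finrank_eq hmap (by omega)⟩
  exact inf_eq_left.1 (Submodule.eq_of_le_of_finrank_eq inf_le_left (by omega))
end
end

section
/- Let L ⊆ V be a subspace such that z L ⊆ L and such that P restricts to a linear isomorphism from L onto W. Then the endomorphism x := P ∘ z ∘ (P|_L)^{−1} of W ≅ ℂ^N belongs to S_n', i.e. x u_j − z_n u_j ∈ span{u_{m+n}, u_{m+2n}} for every j. (Well-definedness step in the proof of Lemma 2.7 of the paper: P z P^{−1} lies in the slice S_n'.) -/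
/-! All three maps `z`, `z_n` and `P` read off coordinates. Write `v ∈ L` for the lift of `w = u_j`.
For a row `i` other than the last row of either Jordan block, the `i`-th coordinate of `P (z v)` is
the coordinate of `v` following the one that `P` puts in position `i`; that coordinate also survives
under `P`, and `P` puts it in position `i + 1`. So `(x w)_i = w_{i+1} = (z_n w)_i`, and
`x w - z_n w` is supported on the rows `m + n` and `m + 2n`. -/

open Module BigOperators

noncomputable section

/-- The standard basis of `V = ℂ^(2(m+2n))`, indexed `1`-based: for `1 ≤ k ≤ m+2n`,
`bigVec k` is `ê_k`, and for `1 ≤ j ≤ m+2n`, `bigVec (m+2n+j)` is `f̂_j`. -/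
def bigVec (m n : ℕ) (k : ℕ) : Fin (2*(m + 2*n)) → ℂ := fun i => if (i : ℕ) + 1 = k then 1 else 0

/-- The matrix of `z ∈ End(V)`, `z ê_i = ê_{i-1}`, `z f̂_j = f̂_{j-1}` (`ê_0 = f̂_0 = 0`). -/
def bigZMat (m n : ℕ) : Matrix (Fin (2*(m + 2*n))) (Fin (2*(m + 2*n))) ℂ :=
  fun i j => if (j : ℕ) = (i : ℕ) + 1 ∧ (j : ℕ) ≠ m + 2*n then 1 else 0

/-- The endomorphism `z` of `V = ℂ^(2(m+2n))`. -/
def bigZ (m n : ℕ) : Module.End ℂ (Fin (2*(m + 2*n)) → ℂ) := Matrix.toLin' (bigZMat m n)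

/-- The matrix of the projection `P : V → W ≅ ℂ^(m+2n)`:
`P ê_i = u_i` for `i ≤ m+n`, `P ê_i = 0` for `i > m+n`,
`P f̂_j = u_{m+n+j}` for `j ≤ n`, `P f̂_j = 0` for `j > n`. -/
def projMat (m n : ℕ) : Matrix (Fin (m + 2*n)) (Fin (2*(m + 2*n))) ℂ :=
  fun i j => if ((j : ℕ) = (i : ℕ) ∧ (i : ℕ) < m + n) ∨
      ((j : ℕ) = (i : ℕ) + n ∧ m + n ≤ (i : ℕ)) then 1 else 0

/-- The projection `P : V → W ≅ ℂ^(m+2n)` (composed with the identification `W ≅ ℂ^(m+2n)`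
via `ê_i ↦ u_i`, `f̂_j ↦ u_{m+n+j}`). -/
def proj (m n : ℕ) : (Fin (2*(m + 2*n)) → ℂ) →ₗ[ℂ] (Fin (m + 2*n) → ℂ) :=
  Matrix.toLin' (projMat m n)


theorem toLin'_apply_of_row {p q : ℕ} (M : Matrix (Fin p) (Fin q) ℂ) (v : Fin q → ℂ)
    (i : Fin p) (k : Fin q) (h : ∀ j, M i j = if j = k then 1 else 0) :
    Matrix.toLin' M v i = v k := by
  simp [Matrix.toLin'_apply, Matrix.mulVec, dotProduct, h]

/-- The position in `V` of the `i`-th coordinate of `W` (both `0`-based). -/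
def coordPos (m n : ℕ) (i : Fin (m + 2*n)) : Fin (2*(m + 2*n)) :=
  ⟨if (i : ℕ) < m + n then i else i + n, by split_ifs <;> omega⟩

theorem proj_apply (m n : ℕ) (v : Fin (2*(m + 2*n)) → ℂ) (i : Fin (m + 2*n)) :
    proj m n v i = v (coordPos m n i) := by
  apply toLin'_apply_of_row
  intro j
  unfold projMat
  congr 1
  simp only [coordPos, Fin.ext_iff, eq_iff_iff]
  split_ifs <;> omega

theorem bigZ_apply (m n : ℕ) (v : Fin (2*(m + 2*n)) → ℂ) (i k : Fin (2*(m + 2*n)))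
    (hk : (k : ℕ) = i + 1) (hne : (k : ℕ) ≠ m + 2*n) : bigZ m n v i = v k := by
  apply toLin'_apply_of_row
  intro j
  unfold bigZMat
  congr 1
  simp only [Fin.ext_iff, eq_iff_iff]
  omega

theorem zn_apply (m n : ℕ) (w : Fin (m + 2*n) → ℂ) (i k : Fin (m + 2*n))
    (hk : (k : ℕ) = i + 1) (hne : (k : ℕ) ≠ m + n) : zn m n w i = w k := by
  apply toLin'_apply_of_row
  intro j
  unfold zMat
  congr 1
  simp only [Fin.ext_iff, eq_iff_iff]
  omega

theorem mem_span_of_support (m n : ℕ) (hn : 1 ≤ n) (y : Fin (m + 2*n) → ℂ)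
    (hy : ∀ i : Fin (m + 2*n), (i : ℕ) + 1 ≠ m + n → (i : ℕ) + 1 ≠ m + 2*n → y i = 0) :
    y ∈ Submodule.span ℂ {stdVec m n (m + n), stdVec m n (m + 2*n)} := by
  rw [Submodule.mem_span_pair]
  refine ⟨y ⟨m + n - 1, by omega⟩, y ⟨m + 2*n - 1, by omega⟩, ?_⟩
  ext i
  simp only [stdVec, Pi.add_apply, Pi.smul_apply, smul_eq_mul]
  by_cases h1 : (i : ℕ) + 1 = m + n
  · have hi : i = ⟨m + n - 1, by omega⟩ := Fin.ext (by simp only; omega)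
    rw [if_pos h1, if_neg (by omega), ← hi]
    ring
  · by_cases h2 : (i : ℕ) + 1 = m + 2*n
    · have hi : i = ⟨m + 2*n - 1, by omega⟩ := Fin.ext (by simp only; omega)
      rw [if_neg h1, if_pos h2, ← hi]
      ring
    · rw [if_neg h1, if_neg h2, hy i h1 h2]
      ring

/-- If `L ⊆ V` is a `z`-stable subspace such that `P` restricts to a
linear isomorphism from `L` onto `W ≅ ℂ^(m+2n)`, then the endomorphism
`x = P ∘ z ∘ (P|_L)⁻¹` of `W ≅ ℂ^(m+2n)` belongs to the slice `S_n'`. -/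
theorem z_stable_lift_mem_slice' (m n : ℕ) (hn : 1 ≤ n)
    (L : Submodule ℂ (Fin (2*(m + 2*n)) → ℂ))
    (hzL : ∀ v ∈ L, bigZ m n v ∈ L)
    (hbij : Function.Bijective ((proj m n).domRestrict L))
    (x : Module.End ℂ (Fin (m + 2*n) → ℂ))
    (hxdef : ∀ v ∈ L, proj m n (bigZ m n v) = x (proj m n v)) :
    x ∈ slice' m n := by
  intro j
  obtain ⟨⟨v, hv⟩, hvj⟩ := hbij.2 (stdVec m n j)
  rw [LinearMap.domRestrict_apply] at hvj
  simp only at hvj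
  rw [← hvj, ← hxdef v hv]
  apply mem_span_of_support m n hn
  intro i h1 h2
  have hi : (i : ℕ) + 1 < m + 2*n := by omega
  have hpos : (coordPos m n ⟨i + 1, hi⟩ : ℕ) = coordPos m n i + 1 := by
    simp only [coordPos]
    split_ifs <;> omega
  have hne : (coordPos m n ⟨i + 1, hi⟩ : ℕ) ≠ m + 2*n := by
    simp only [coordPos]
    split_ifs <;> omega
  rw [Pi.sub_apply, proj_apply, bigZ_apply m n v _ _ hpos hne,
    zn_apply m n _ i ⟨i + 1, hi⟩ rfl h1, proj_apply, sub_self]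
end
end

section
/- Let Q be the set of complete flags (0 = L_0 ⊂ L_1 ⊂ ⋯ ⊂ L_N) of subspaces of V with dim L_i = i, z L_i ⊆ L_{i−1} for all 1 ≤ i ≤ N, and P(L_N) = W. For (L_•) ∈ Q the projection P restricts to a linear isomorphism L_N → W, and the map α sending (L_•) to the pair ((P L_1 ⊂ P L_2 ⊂ ⋯ ⊂ P L_N = W), x) with x = P ∘ z ∘ (P|_{L_N})^{−1}, is a well-defined bijection from Q onto the set of pairs ((V_1 ⊂ ⋯ ⊂ V_N = ℂ^N), x) where (V_i) is a complete flag in ℂ^N (dim V_i = i), x ∈ S_n', and x V_i ⊆ V_{i−1} for all 1 ≤ i ≤ N (with V_0 = 0). (Lemma 2.7 of the paper: the set-theoretic isomorphism Q_{m+2n} ≅ S_n' ×_{sl} T*B_n.) -/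
/-!
Write `N = m + 2n`, and let `s : W → L_N` be the inverse of `P|_{L_N}`. Since `L_N` is stable
under `z`, the map `x = P z s` satisfies `s x = z s`; hence the coordinate of `s w` along `ê_k` is
the first coordinate of `z^(k-1) s w = s (x^(k-1) w)`, that is `(x^(k-1) w)_1`, and likewise the
coordinate along `f̂_k` is `(x^(k-1) w)_{m+n+1}`. So `s` is determined by `x`; this is the
explicit map `secMap` below, and `secMap_proj` recovers every `L_i` as `s (P L_i)`, which gives
injectivity.

Conversely, membership in the slice says exactly that `(x w)_i = w_{i+1}` for `i ≠ m+n, N`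
(`mem_slice'_iff`), which makes `P s = id` for the explicit `s` (`proj_secMap`). A pair in the
target has `x^N = 0`, which gives `z s = s x` (`bigZ_secMap`), so `L_i = s V_i` is a flag in `Q`
mapping to the given pair.
-/

open Module BigOperators

noncomputable section

/-- Index set for complete flags of length `m+2n`: `{0, …, m+2n}`. -/
abbrev flagIdxQ (m n : ℕ) := {i : ℕ // i ≤ m + 2*n}

-- `x = P ∘ z ∘ (P|_L)⁻¹ ∈ End(ℂ^(m+2n))`, defined whenever `P` restricts to a
-- bijection from `L` onto `W ≅ ℂ^(m+2n)` (junk value `0` otherwise).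
open Classical in
noncomputable def flagX (m n : ℕ) (L : Submodule ℂ (Fin (2*(m + 2*n)) → ℂ)) :
    Module.End ℂ (Fin (m + 2*n) → ℂ) :=
  if h : Function.Bijective ((proj m n).domRestrict L) then
    (proj m n) ∘ₗ (bigZ m n) ∘ₗ L.subtype ∘ₗ
      (LinearEquiv.ofBijective ((proj m n).domRestrict L) h).symm.toLinearMap
  else 0

/-- The set `Q` of complete flags `0 = L_0 ⊂ L_1 ⊂ ⋯ ⊂ L_{m+2n}` of subspaces of `V`
with `dim L_i = i`, `z L_i ⊆ L_{i−1}`, and `P(L_{m+2n}) = W`. -/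
def QSet (m n : ℕ) : Set (flagIdxQ m n → Submodule ℂ (Fin (2*(m + 2*n)) → ℂ)) :=
  { L | (∀ i, i.val = 0 → L i = ⊥) ∧
      (∀ i, Module.finrank ℂ (L i) = i.val) ∧
      (∀ i j, i.val ≤ j.val → L i ≤ L j) ∧
      (∀ i j, i.val = j.val + 1 → ∀ v ∈ L i, bigZ m n v ∈ L j) ∧
      (∀ i, i.val = m + 2*n → (L i).map (proj m n) = ⊤) }

/-- The map `α` sending a flag `(L_•) ∈ Q` to the pair
`((P L_0 ⊂ P L_1 ⊂ ⋯ ⊂ P L_{m+2n} = W), x)` with `x = P ∘ z ∘ (P|_{L_{m+2n}})⁻¹`. -/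
noncomputable def betaMap (m n : ℕ)
    (L : flagIdxQ m n → Submodule ℂ (Fin (2*(m + 2*n)) → ℂ)) :
    (flagIdxQ m n → Submodule ℂ (Fin (m + 2*n) → ℂ)) ×
      Module.End ℂ (Fin (m + 2*n) → ℂ) :=
  (fun i => (L i).map (proj m n), flagX m n (L ⟨m + 2*n, le_refl _⟩))

/-- The set of pairs `((V_1 ⊂ ⋯ ⊂ V_{m+2n} = ℂ^(m+2n)), x)` where `(V_i)` is a complete
flag in `ℂ^(m+2n)`, `x ∈ S_n'`, and `x V_i ⊆ V_{i−1}` for all `i` (with `V_0 = 0`). -/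
def BSet (m n : ℕ) : Set ((flagIdxQ m n → Submodule ℂ (Fin (m + 2*n) → ℂ)) ×
    Module.End ℂ (Fin (m + 2*n) → ℂ)) :=
  { p | p.2 ∈ slice' m n ∧
      (∀ i, i.val = 0 → p.1 i = ⊥) ∧
      (∀ i, Module.finrank ℂ (p.1 i) = i.val) ∧
      (∀ i j, i.val ≤ j.val → p.1 i ≤ p.1 j) ∧
      (∀ i, i.val = m + 2*n → p.1 i = ⊤) ∧
      (∀ i j, i.val = j.val + 1 → ∀ v ∈ p.1 i, p.2 v ∈ p.1 j) }

/-! ### Coordinates of the standard maps -/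

lemma bigZ_apply_of_lt (m n : ℕ) (v : Fin (2*(m + 2*n)) → ℂ) (i : ℕ)
    (h : i + 1 < 2*(m + 2*n)) (h' : i + 1 ≠ m + 2*n) :
    bigZ m n v ⟨i, by omega⟩ = v ⟨i + 1, h⟩ := by
  simp only [bigZ, Matrix.toLin'_apply, Matrix.mulVec, dotProduct, bigZMat]
  rw [Finset.sum_eq_single ⟨i + 1, h⟩]
  · simp [h']
  · intro b _ hb
    have : (b : ℕ) ≠ i + 1 := fun e => hb (Fin.ext e)
    simp [this]
  · simp

lemma bigZ_apply_eq_zero (m n : ℕ) (v : Fin (2*(m + 2*n)) → ℂ) (i : Fin (2*(m + 2*n)))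
    (h : (i : ℕ) + 1 = m + 2*n ∨ (i : ℕ) + 1 = 2*(m + 2*n)) :
    bigZ m n v i = 0 := by
  simp only [bigZ, Matrix.toLin'_apply, Matrix.mulVec, dotProduct, bigZMat]
  apply Finset.sum_eq_zero
  intro b _
  have := b.2
  rw [if_neg (by omega), zero_mul]

lemma proj_apply_of_lt (m n : ℕ) (v : Fin (2*(m + 2*n)) → ℂ) (i : ℕ) (h : i < m + n) :
    proj m n v ⟨i, by omega⟩ = v ⟨i, by omega⟩ := by
  simp only [proj, Matrix.toLin'_apply, Matrix.mulVec, dotProduct, projMat]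
  rw [Finset.sum_eq_single ⟨i, by omega⟩]
  · simp [h]
  · intro b _ hb
    have : (b : ℕ) ≠ i := fun e => hb (Fin.ext e)
    rw [if_neg (by omega), zero_mul]
  · simp

lemma proj_apply_of_ge (m n : ℕ) (v : Fin (2*(m + 2*n)) → ℂ) (i : ℕ) (h : m + n ≤ i)
    (h' : i < m + 2*n) :
    proj m n v ⟨i, h'⟩ = v ⟨i + n, by omega⟩ := by
  simp only [proj, Matrix.toLin'_apply, Matrix.mulVec, dotProduct, projMat]
  rw [Finset.sum_eq_single ⟨i + n, by omega⟩]
  · simp [h]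
  · intro b _ hb
    have : (b : ℕ) ≠ i + n := fun e => hb (Fin.ext e)
    rw [if_neg (by omega), zero_mul]
  · simp

lemma zn_apply_of_lt (m n : ℕ) (w : Fin (m + 2*n) → ℂ) (i : ℕ)
    (h : i + 1 < m + 2*n) (h' : i + 1 ≠ m + n) :
    zn m n w ⟨i, by omega⟩ = w ⟨i + 1, h⟩ := by
  simp only [zn, Matrix.toLin'_apply, Matrix.mulVec, dotProduct, zMat]
  rw [Finset.sum_eq_single ⟨i + 1, h⟩]
  · simp [h']
  · intro b _ hb
    have : (b : ℕ) ≠ i + 1 := fun e => hb (Fin.ext e)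
    simp [this]
  · simp

lemma bigZ_pow_apply (m n : ℕ) (k : ℕ) (v : Fin (2*(m + 2*n)) → ℂ) (i : ℕ)
    (h : i + k < 2*(m + 2*n)) (h' : i + k < m + 2*n ∨ m + 2*n ≤ i) :
    ((bigZ m n) ^ k) v ⟨i, by omega⟩ = v ⟨i + k, h⟩ := by
  induction k generalizing v with
  | zero => rfl
  | succ k ih =>
    rw [pow_succ, Module.End.mul_apply, ih _ (by omega) (by omega),
      bigZ_apply_of_lt m n v (i + k) (by omega) (by omega)]
    rfl

/-- Membership in the slice, read off row by row. -/
lemma mem_slice'_iff (m n : ℕ) (hn : 1 ≤ n) (x : Module.End ℂ (Fin (m + 2*n) → ℂ)) :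
    x ∈ slice' m n ↔ ∀ w (i : ℕ) (h : i + 1 < m + 2*n), i + 1 ≠ m + n →
      x w ⟨i, by omega⟩ = w ⟨i + 1, h⟩ := by
  constructor
  · intro hx w i h h'
    have key : (LinearMap.proj (R := ℂ) (φ := fun _ : Fin (m + 2*n) => ℂ) ⟨i, by omega⟩) ∘ₗ
        (x - zn m n) = 0 := by
      refine LinearMap.pi_ext' fun j => LinearMap.ext_ring ?_
      have hj := hx (j + 1)
      have e : stdVec m n (j + 1) = Pi.single j 1 := by
        ext k
        simp [stdVec, Pi.single_apply, Fin.ext_iff]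
      rw [e, Submodule.mem_span_pair] at hj
      obtain ⟨a, b, hab⟩ := hj
      have := congrFun hab ⟨i, by omega⟩
      simp only [stdVec, Pi.add_apply, Pi.smul_apply] at this
      rw [if_neg h', if_neg (by omega)] at this
      simpa using this.symm
    have := LinearMap.congr_fun key w
    simp only [LinearMap.comp_apply, LinearMap.proj_apply, LinearMap.sub_apply, Pi.sub_apply,
      LinearMap.zero_apply, sub_eq_zero] at this
    rw [this, zn_apply_of_lt m n w i h h']
  · intro hx j
    rw [Submodule.mem_span_pair]
    refine ⟨(x (stdVec m n j) - zn m n (stdVec m n j)) ⟨m + n - 1, by omega⟩,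
      (x (stdVec m n j) - zn m n (stdVec m n j)) ⟨m + 2*n - 1, by omega⟩, ?_⟩
    ext ⟨i, hi⟩
    simp only [Pi.add_apply, Pi.smul_apply, smul_eq_mul, stdVec]
    by_cases h1 : i + 1 = m + n
    · obtain rfl : i = m + n - 1 := by omega
      rw [if_pos h1, if_neg (by omega)]
      simp
    · by_cases h2 : i + 1 = m + 2*n
      · obtain rfl : i = m + 2*n - 1 := by omega
        rw [if_neg h1, if_pos h2]
        simp
      · rw [if_neg h1, if_neg h2]
        simp only [Pi.sub_apply]
        rw [hx _ i (by omega) h1, zn_apply_of_lt m n _ i (by omega) h1]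
        simp

/-! ### The section attached to an endomorphism -/

/-- The map `s : W → V` attached to `x`: the coordinate of `s w` along `ê_k` is
`(x^(k-1) w)_1` and the one along `f̂_k` is `(x^(k-1) w)_{m+n+1}`. -/
def secMap (m n : ℕ) (hn : 1 ≤ n) (x : Module.End ℂ (Fin (m + 2*n) → ℂ)) :
    (Fin (m + 2*n) → ℂ) →ₗ[ℂ] (Fin (2*(m + 2*n)) → ℂ) :=
  LinearMap.pi fun k =>
    if (k : ℕ) < m + 2*n then
      LinearMap.proj (R := ℂ) (φ := fun _ : Fin (m + 2*n) => ℂ) ⟨0, by omega⟩ ∘ₗ (x ^ (k : ℕ))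
    else
      LinearMap.proj (R := ℂ) (φ := fun _ : Fin (m + 2*n) => ℂ) ⟨m + n, by omega⟩ ∘ₗ
        (x ^ ((k : ℕ) - (m + 2*n)))

lemma secMap_apply_of_lt (m n : ℕ) (hn : 1 ≤ n) (x : Module.End ℂ (Fin (m + 2*n) → ℂ))
    (w : Fin (m + 2*n) → ℂ) (k : ℕ) (h : k < m + 2*n) :
    secMap m n hn x w ⟨k, by omega⟩ = (x ^ k) w ⟨0, by omega⟩ := by
  simp [secMap, h]

lemma secMap_apply_add (m n : ℕ) (hn : 1 ≤ n) (x : Module.End ℂ (Fin (m + 2*n) → ℂ))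
    (w : Fin (m + 2*n) → ℂ) (k : ℕ) (h : m + 2*n + k < 2*(m + 2*n)) :
    secMap m n hn x w ⟨m + 2*n + k, h⟩ = (x ^ k) w ⟨m + n, by omega⟩ := by
  simp [secMap]

lemma slice_pow_apply (m n : ℕ) (hn : 1 ≤ n) (x : Module.End ℂ (Fin (m + 2*n) → ℂ))
    (hx : x ∈ slice' m n) (k : ℕ) (w : Fin (m + 2*n) → ℂ) (i : ℕ)
    (h : i + k < m + 2*n) (h' : i + k < m + n ∨ m + n ≤ i) :
    (x ^ k) w ⟨i, by omega⟩ = w ⟨i + k, h⟩ := by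
  induction k generalizing w with
  | zero => rfl
  | succ k ih =>
    rw [pow_succ, Module.End.mul_apply, ih _ (by omega) (by omega),
      (mem_slice'_iff m n hn x).1 hx w (i + k) (by omega) (by omega)]
    rfl

lemma proj_secMap (m n : ℕ) (hn : 1 ≤ n) (x : Module.End ℂ (Fin (m + 2*n) → ℂ))
    (hx : x ∈ slice' m n) (w : Fin (m + 2*n) → ℂ) :
    proj m n (secMap m n hn x w) = w := by
  ext ⟨i, hi⟩
  by_cases h : i < m + n
  · rw [proj_apply_of_lt m n _ i h, secMap_apply_of_lt m n hn x w i hi,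
      slice_pow_apply m n hn x hx i w 0 (by omega) (by omega)]
    simp
  · obtain ⟨k, rfl⟩ : ∃ k, i = m + n + k := ⟨i - (m + n), by omega⟩
    rw [proj_apply_of_ge m n _ _ (by omega) hi]
    have e : (⟨m + n + k + n, by omega⟩ : Fin (2*(m + 2*n))) = ⟨m + 2*n + k, by omega⟩ :=
      Fin.ext (by simp only; omega)
    rw [e, secMap_apply_add, slice_pow_apply m n hn x hx k w (m + n) hi (by omega)]

lemma bigZ_secMap (m n : ℕ) (hn : 1 ≤ n) (x : Module.End ℂ (Fin (m + 2*n) → ℂ))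
    (hx : x ^ (m + 2*n) = 0) (w : Fin (m + 2*n) → ℂ) :
    bigZ m n (secMap m n hn x w) = secMap m n hn x (x w) := by
  have hp : ∀ k, (x ^ k) (x w) = (x ^ (k + 1)) w := fun k => by
    rw [pow_succ, Module.End.mul_apply]
  ext ⟨i, hi⟩
  by_cases h : i < m + 2*n
  · rw [secMap_apply_of_lt m n hn x _ i h, hp]
    by_cases h1 : i + 1 = m + 2*n
    · rw [bigZ_apply_eq_zero m n _ _ (Or.inl h1), h1, hx]
      simp
    · rw [bigZ_apply_of_lt m n _ i (by omega) h1,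
        secMap_apply_of_lt m n hn x w (i + 1) (by omega)]
  · obtain ⟨k, rfl⟩ : ∃ k, i = m + 2*n + k := ⟨i - (m + 2*n), by omega⟩
    rw [secMap_apply_add m n hn x _ k hi, hp]
    by_cases h1 : k + 1 = m + 2*n
    · rw [bigZ_apply_eq_zero m n _ _ (Or.inr (by simp only; omega)), h1, hx]
      simp
    · rw [bigZ_apply_of_lt m n _ _ (by omega) (by omega)]
      exact secMap_apply_add m n hn x w (k + 1) (by omega)

/-! ### Flags in `Q` -/

lemma domRestrict_bijective (m n : ℕ) (L : Submodule ℂ (Fin (2*(m + 2*n)) → ℂ))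
    (hd : Module.finrank ℂ L = m + 2*n) (ht : L.map (proj m n) = ⊤) :
    Function.Bijective ((proj m n).domRestrict L) := by
  have hs : Function.Surjective ((proj m n).domRestrict L) := by
    intro w
    have : w ∈ L.map (proj m n) := ht ▸ Submodule.mem_top
    obtain ⟨v, hv, rfl⟩ := this
    exact ⟨⟨v, hv⟩, rfl⟩
  refine ⟨?_, hs⟩
  exact (LinearMap.injective_iff_surjective_of_finrank_eq_finrank (by simp [hd])).2 hs

lemma flagX_proj (m n : ℕ) (L : Submodule ℂ (Fin (2*(m + 2*n)) → ℂ))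
    (h : Function.Bijective ((proj m n).domRestrict L)) (v) (hv : v ∈ L) :
    flagX m n L (proj m n v) = proj m n (bigZ m n v) := by
  have e : (LinearEquiv.ofBijective ((proj m n).domRestrict L) h).symm (proj m n v) = ⟨v, hv⟩ := by
    rw [LinearEquiv.symm_apply_eq]
    rfl
  simp [flagX, h, e]

section

variable {m n : ℕ} {L : Submodule ℂ (Fin (2*(m + 2*n)) → ℂ)}

lemma flagX_mem_slice' (hn : 1 ≤ n) (h : Function.Bijective ((proj m n).domRestrict L)) :
    flagX m n L ∈ slice' m n := by
  rw [mem_slice'_iff m n hn]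
  intro w i hi hi'
  obtain ⟨⟨v, hv⟩, rfl⟩ := h.2 w
  rw [LinearMap.domRestrict_apply, flagX_proj m n L h v hv]
  by_cases hl : i < m + n
  · rw [proj_apply_of_lt m n _ i hl, proj_apply_of_lt m n _ (i + 1) (by omega),
      bigZ_apply_of_lt m n v i (by omega) (by omega)]
  · rw [proj_apply_of_ge m n _ i (by omega), proj_apply_of_ge m n _ (i + 1) (by omega),
      bigZ_apply_of_lt m n v (i + n) (by omega) (by omega)]
    congr 2
    omega

/-- On a `z`-stable `L` on which `P` is bijective, `secMap` inverts `P`. -/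
lemma secMap_proj (hn : 1 ≤ n) (h : Function.Bijective ((proj m n).domRestrict L))
    (hz : ∀ v ∈ L, bigZ m n v ∈ L) (v) (hv : v ∈ L) :
    secMap m n hn (flagX m n L) (proj m n v) = v := by
  have hk : ∀ k : ℕ, ∀ v ∈ L,
      (flagX m n L ^ k) (proj m n v) = proj m n ((bigZ m n ^ k) v) := by
    intro k
    induction k with
    | zero => intros; rfl
    | succ k ih =>
      intro v hv
      rw [pow_succ, Module.End.mul_apply, flagX_proj m n L h v hv, ih _ (hz v hv), pow_succ,
        Module.End.mul_apply]
  ext ⟨i, hi⟩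
  by_cases hl : i < m + 2*n
  · rw [secMap_apply_of_lt m n hn _ _ i hl, hk i v hv, proj_apply_of_lt m n _ 0 (by omega),
      bigZ_pow_apply m n i v 0 (by omega) (by omega)]
    simp
  · obtain ⟨k, rfl⟩ : ∃ k, i = m + 2*n + k := ⟨i - (m + 2*n), by omega⟩
    rw [secMap_apply_add, hk k v hv, proj_apply_of_ge m n _ (m + n) (by omega)]
    have e : (⟨m + n + n, by omega⟩ : Fin (2*(m + 2*n))) = ⟨m + 2*n, by omega⟩ :=
      Fin.ext (by simp only; omega)
    rw [e, bigZ_pow_apply m n k v (m + 2*n) hi (by omega)]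

end

/-- A linear map with a left inverse on `U` preserves the dimension of `U`. -/
lemma finrank_map_of_leftInv {E F : Type*} [AddCommGroup E] [Module ℂ E] [AddCommGroup F]
    [Module ℂ F] [FiniteDimensional ℂ E] [FiniteDimensional ℂ F] (f : E →ₗ[ℂ] F) (g : F →ₗ[ℂ] E)
    (U : Submodule ℂ E) (h : ∀ v ∈ U, g (f v) = v) :
    (U.map f).map g = U ∧ Module.finrank ℂ (U.map f) = Module.finrank ℂ U := by
  have e : (U.map f).map g = U := by
    ext v
    constructor
    · rintro ⟨_, ⟨u, hu, rfl⟩, rfl⟩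
      rw [h u hu]
      exact hu
    · intro hv
      exact ⟨f v, ⟨v, hv, rfl⟩, h v hv⟩
  refine ⟨e, le_antisymm (Submodule.finrank_map_le f U) ?_⟩
  conv_lhs => rw [← e]
  exact Submodule.finrank_map_le g _

lemma QSet_bijective (m n : ℕ) (L) (hL : L ∈ QSet m n) :
    Function.Bijective ((proj m n).domRestrict (L ⟨m + 2*n, le_refl _⟩)) :=
  domRestrict_bijective m n _ (hL.2.1 _) (hL.2.2.2.2 _ rfl)

lemma QSet_secMap_proj (m n : ℕ) (hn : 1 ≤ n) (L) (hL : L ∈ QSet m n) (i) (v) (hv : v ∈ L i) :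
    secMap m n hn (flagX m n (L ⟨m + 2*n, le_refl _⟩)) (proj m n v) = v := by
  have hb := QSet_bijective m n L hL
  obtain ⟨-, -, h3, h4, -⟩ := hL
  refine secMap_proj hn hb (fun v hv => ?_) v (h3 i ⟨m + 2*n, le_refl _⟩ i.2 hv)
  exact h3 ⟨m + 2*n - 1, by omega⟩ _ (by simp)
    (h4 _ ⟨m + 2*n - 1, by omega⟩ (by simp only; omega) v hv)

lemma BSet_pow_eq_zero (m n : ℕ) (p) (hp : p ∈ BSet m n) : p.2 ^ (m + 2*n) = 0 := by
  obtain ⟨-, h0, -, -, ht, hx⟩ := hp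
  have key : ∀ k : ℕ, ∀ w, (p.2 ^ k) w ∈ p.1 ⟨m + 2*n - k, by omega⟩ ∨ m + 2*n < k := by
    intro k
    induction k with
    | zero =>
      intro w
      left
      rw [ht _ (by simp)]
      trivial
    | succ k ih =>
      intro w
      by_cases hk : m + 2*n < k + 1
      · exact Or.inr hk
      · left
        rw [pow_succ', Module.End.mul_apply]
        exact hx _ _ (by simp only; omega) _ ((ih w).resolve_right (by omega))
  refine LinearMap.ext fun w => ?_
  have := (key (m + 2*n) w).resolve_right (by omega)
  rw [h0 _ (by simp)] at this
  simpa using this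

/-- For every flag `(L_•) ∈ Q`, `P` restricts to a linear isomorphism
`L_{m+2n} → W`, and the map `α : (L_•) ↦ ((P L_•), P ∘ z ∘ (P|_{L_{m+2n}})⁻¹)` is a
well-defined bijection from `Q` onto `S_n' ×_{sl} T*B_n` (Lemma 2.7 of the paper). -/
theorem betaMap_bijOn (m n : ℕ) (hn : 1 ≤ n) :
    (∀ L ∈ QSet m n,
      Function.Bijective ((proj m n).domRestrict (L ⟨m + 2*n, le_refl _⟩))) ∧
    Set.BijOn (betaMap m n) (QSet m n) (BSet m n) := by
  refine ⟨QSet_bijective m n, ?_, ?_, ?_⟩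
  · intro L hL
    have hb := QSet_bijective m n L hL
    have hs := QSet_secMap_proj m n hn L hL
    obtain ⟨h1, h2, h3, h4, h5⟩ := hL
    refine ⟨flagX_mem_slice' hn hb, ?_, ?_, ?_, h5, ?_⟩
    · intro i hi
      simp [betaMap, h1 i hi]
    · intro i
      exact (finrank_map_of_leftInv _ _ (L i) (hs i)).2.trans (h2 i)
    · intro i j hij
      exact Submodule.map_mono (h3 i j hij)
    · rintro i j hij _ ⟨v, hv, rfl⟩
      have hv' := h3 i ⟨m + 2*n, le_refl _⟩ i.2 hv
      exact ⟨bigZ m n v, h4 i j hij v hv, (flagX_proj m n _ hb v hv').symm⟩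
  · intro L hL L' hL' e
    have e1 := fun i => congrFun (congrArg Prod.fst e) i
    have e2 := congrArg Prod.snd e
    simp only [betaMap] at e1 e2
    funext i
    rw [← (finrank_map_of_leftInv _ _ (L i) (QSet_secMap_proj m n hn L hL i)).1,
      ← (finrank_map_of_leftInv _ _ (L' i) (QSet_secMap_proj m n hn L' hL' i)).1, e1, e2]
  · intro p hp
    have hnil := BSet_pow_eq_zero m n p hp
    obtain ⟨hx, h0, hd, hm, ht, hst⟩ := hp
    have hps := proj_secMap m n hn p.2 hx
    have hzs := bigZ_secMap m n hn p.2 hnil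
    have hr := fun i => finrank_map_of_leftInv (secMap m n hn p.2) (proj m n) (p.1 i)
      (fun v _ => hps v)
    have hQ : (fun i => (p.1 i).map (secMap m n hn p.2)) ∈ QSet m n := by
      refine ⟨?_, ?_, ?_, ?_, ?_⟩
      · intro i hi
        simp [h0 i hi]
      · intro i
        exact (hr i).2.trans (hd i)
      · intro i j hij
        exact Submodule.map_mono (hm i j hij)
      · rintro i j hij _ ⟨w, hw, rfl⟩
        exact ⟨p.2 w, hst i j hij w hw, (hzs w).symm⟩
      · intro i hi
        exact (hr i).1.trans (ht i hi)
    refine ⟨_, hQ, Prod.ext (funext fun i => (hr i).1) (LinearMap.ext fun w => ?_)⟩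
    have hw : secMap m n hn p.2 w ∈ (p.1 ⟨m + 2*n, le_refl _⟩).map (secMap m n hn p.2) :=
      ⟨w, by rw [ht _ rfl]; trivial, rfl⟩
    have := flagX_proj m n _ (QSet_bijective m n _ hQ) _ hw
    rw [hps, hzs, hps] at this
    exact this
end
end
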